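/- Let p > q be odd primes and let G = NH be a group such that N ≅ Z_p × Z_p is normal in G, H ≅ D_{2q} is a subgroup of G, and C_G(N) = N. Then q divides p^2 - 1, and any two such groups G are isomorphic. -/

import Mathlib

/-- The hypothesis of the proposition: `G = NH` with `N ≅ ℤ_p × ℤ_p` normal,
`H ≅ D_{2q}` a subgroup, and `C_G(N) = N`. -/
def NHConfig (p q : ℕ) (G : Type*) [Group G] (N H : Subgroup G) : Prop :=
  N.Normal ∧
  (∀ g : G, ∃ n ∈ N, ∃ h ∈ H, g = n * h) ∧
  Nonempty (↥N ≃* Multiplicative (ZMod p × ZMod p)) ∧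
  Nonempty (↥H ≃* DihedralGroup q) ∧
  Subgroup.centralizer (N : Set G) = N

/-!
`H` acts on `N`, a plane over `𝔽_p`, by a faithful representation of the dihedral group `D_n`.
The rotation `R` is conjugate to its inverse and `R² ≠ 1`, which forces `det R = 1`, so that
`R + R⁻¹ = tr R` by Cayley–Hamilton. As the order `n` of `R` is prime to `p`, a root `z` of the
minimal polynomial of `R` in an algebraic closure is a primitive `n`-th root of unity, and
`tr Rᵏ = zᵏ + z⁻ᵏ` lies in `𝔽_p`. Frobenius therefore permutes `{z, z⁻¹}`, whence `z ^ p² = z` and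
`n ∣ p² - 1`.

Since the primitive `n`-th roots of unity are powers of one another, the automorphism
`r ↦ rᵏ` of `D_n` gives the rotations of any two such representations the same trace `t` for a
suitable `k`. If `v` is fixed by the reflection, then in the basis `v, R v` the rotation and the
reflection have matrices determined by `t`, so the two representations are isomorphic, and with
them the semidirect products `N ⋊ H`.
-/

open Module DihedralGroup
open LinearMap (trace)

section Plane

open Polynomial

theorem eq_one_of_isNilpotent_sub_one {F A : Type*} [Field F] [Ring A] [Algebra F A] {a : A}
    {n : ℕ} (hn : (n : F) ≠ 0) (ha : a ^ n = 1) (hnil : IsNilpotent (a - 1)) : a = 1 := by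
  obtain ⟨m, hm⟩ := hnil
  have hsq : Squarefree (minpoly F a) :=
    (X_pow_sub_one_separable_iff.2 hn).squarefree.squarefree_of_dvd
      (minpoly.dvd F a (by simp [ha]))
  have hdvd : minpoly F a ∣ (X - 1) ^ (m + 1) := minpoly.dvd F a (by simp [pow_succ, hm])
  simpa [sub_eq_zero] using
    (minpoly.dvd_iff).1 ((hsq.dvd_pow_iff_dvd m.succ_ne_zero).1 hdvd)

variable {F V : Type*} [Field F] [AddCommGroup V] [Module F V] {f g : End F V}

theorem charpoly_of_finrank_eq_two [FiniteDimensional F V] (hV : finrank F V = 2) (f : End F V) :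
    f.charpoly = X ^ 2 - C (trace F V f) * X + C f.det := by
  let b : Basis (Fin 2) F V := finBasisOfFinrankEq F V hV
  rw [← f.charpoly_toMatrix b, Matrix.charpoly_of_card_eq_two _ (Fintype.card_fin 2),
    f.det_toMatrix, ← LinearMap.trace_eq_matrix_trace]

theorem sq_eq_trace_smul_sub_det_smul (hV : finrank F V = 2) (f : End F V) :
    f ^ 2 = trace F V f • f - f.det • 1 := by
  have : FiniteDimensional F V := finite_of_finrank_eq_succ hV
  have h := f.aeval_self_charpoly
  simp only [charpoly_of_finrank_eq_two hV, map_add, map_sub, map_mul, map_pow, aeval_X, aeval_C,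
    Algebra.algebraMap_eq_smul_one, smul_mul_assoc, one_mul] at h
  linear_combination (norm := module) h

theorem add_det_smul_eq_trace_smul_one (hV : finrank F V = 2) (hfg : f * g = 1) :
    f + f.det • g = trace F V f • 1 := by
  have h := congrArg (· * g) (sq_eq_trace_smul_sub_det_smul hV f)
  simp only [sq, mul_assoc, hfg, sub_mul, smul_mul_assoc, one_mul, mul_one] at h
  exact eq_sub_iff_add_eq.1 h

theorem det_eq_one_of_isConj_inv {G : Type*} [Group G] (hV : finrank F V = 2)
    (ρ : Representation F G V) {g : G} (hg : IsConj g g⁻¹) (h : ρ g ^ 2 ≠ 1) :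
    (ρ g).det = 1 := by
  have hinv : ρ g * ρ g⁻¹ = 1 := by rw [← map_mul, mul_inv_cancel, map_one]
  have htrace_inv : trace F V (ρ g⁻¹) = trace F V (ρ g) := by
    obtain ⟨c, hc⟩ := isConj_iff.1 hg
    exact hc ▸ ρ.char_conj g c
  have hdet_sq : (ρ g).det * (ρ g).det = 1 := by
    have hdet_inv : (ρ g).det = (ρ g⁻¹).det :=
      isConj_iff_eq.1 ((LinearMap.det.comp ρ).map_isConj hg)
    nth_rw 2 [hdet_inv]
    rw [← map_mul, hinv, map_one]
  by_contra hne
  have hdet : (ρ g).det = -1 := (mul_self_eq_one_iff.1 hdet_sq).resolve_left hne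
  have htrace : trace F V (ρ g) = 0 := by
    have : FiniteDimensional F V := finite_of_finrank_eq_succ hV
    have h2 := congrArg (trace F V) (add_det_smul_eq_trace_smul_one hV hinv)
    simp only [map_add, map_smul, htrace_inv, LinearMap.trace_one, hV, smul_eq_mul,
      Nat.cast_ofNat] at h2
    have hmul : trace F V (ρ g) * ((ρ g).det - 1) = 0 := by linear_combination h2
    exact (mul_eq_zero.1 hmul).resolve_right (sub_ne_zero.2 hne)
  exact h (by rw [sq_eq_trace_smul_sub_det_smul hV, htrace, hdet]; module)

end Plane

section Eigenvalue

open Polynomial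

variable {F V K : Type*} [Field F] [AddCommGroup V] [Module F V] [Field K] [Algebra F K]
  {f : End F V} {z : K}

theorem algebraMap_trace_pow (hV : finrank F V = 2) (hf : f.det = 1)
    (hz : aeval z (minpoly F f) = 0) (k : ℕ) :
    algebraMap F K (trace F V (f ^ k)) = z ^ k + (z ^ k)⁻¹ := by
  have : FiniteDimensional F V := finite_of_finrank_eq_succ hV
  -- `f` is a root of `χ(X ^ k)`, where `χ` is the characteristic polynomial of `f ^ k`.
  have hroot : aeval z (expand F k (f ^ k).charpoly) = 0 := by
    refine aeval_eq_zero_of_dvd_aeval_eq_zero (minpoly.dvd F f ?_) hz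
    rw [expand_aeval, LinearMap.aeval_self_charpoly]
  have hquad : (z ^ k) ^ 2 - algebraMap F K (trace F V (f ^ k)) * z ^ k + 1 = 0 := by
    simpa [charpoly_of_finrank_eq_two hV, hf] using (expand_aeval k _ z).symm.trans hroot
  have hzk : z ^ k ≠ 0 := by
    intro h
    simp [h] at hquad
  field_simp
  linear_combination -hquad

theorem isPrimitiveRoot_orderOf (hV : finrank F V = 2) (hf : f.det = 1)
    (hn : (orderOf f : F) ≠ 0) (hz : aeval z (minpoly F f) = 0) :
    IsPrimitiveRoot z (orderOf f) := by
  refine ⟨?_, fun l hl => orderOf_dvd_of_pow_eq_one ?_⟩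
  · have : aeval z (X ^ orderOf f - 1 : F[X]) = 0 :=
      aeval_eq_zero_of_dvd_aeval_eq_zero (minpoly.dvd F f (by simp [pow_orderOf_eq_one])) hz
    simpa [sub_eq_zero] using this
  · have htrace : trace F V (f ^ l) = 2 := by
      apply (algebraMap F K).injective
      rw [algebraMap_trace_pow hV hf hz, hl, inv_one, one_add_one_eq_two, map_ofNat]
    have hunip : (f ^ l - 1) ^ 2 = 0 := by
      have := sq_eq_trace_smul_sub_det_smul hV (f ^ l)
      rw [htrace, map_pow, hf, one_pow] at this
      rw [(Commute.one_right (f ^ l)).sub_sq, this]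
      simp [two_smul, two_mul]
    exact eq_one_of_isNilpotent_sub_one hn (by rw [pow_right_comm, pow_orderOf_eq_one, one_pow])
      ⟨2, hunip⟩

theorem exists_isPrimitiveRoot_trace_pow (K : Type*) [Field K] [Algebra F K] [IsAlgClosed K]
    (hV : finrank F V = 2) (hf : f.det = 1) (hn : (orderOf f : F) ≠ 0) :
    ∃ z : K, IsPrimitiveRoot z (orderOf f) ∧
      ∀ k : ℕ, algebraMap F K (trace F V (f ^ k)) = z ^ k + (z ^ k)⁻¹ := by
  have : FiniteDimensional F V := finite_of_finrank_eq_succ hV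
  have : Nontrivial V := nontrivial_of_finrank_pos (R := F) (by simp [hV])
  obtain ⟨z, hz⟩ := IsAlgClosed.exists_aeval_eq_zero K (minpoly F f)
    (minpoly.degree_pos (Algebra.IsIntegral.isIntegral f)).ne'
  exact ⟨z, isPrimitiveRoot_orderOf hV hf hn hz, algebraMap_trace_pow hV hf hz⟩

theorem exists_coprime_trace_eq_trace_pow {W : Type*} [AddCommGroup W] [Module F W]
    {g : End F W} (hV : finrank F V = 2) (hW : finrank F W = 2) (hf : f.det = 1) (hg : g.det = 1)
    (hn : (orderOf f : F) ≠ 0) (hfg : orderOf f = orderOf g) :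
    ∃ k : ℕ, k.Coprime (orderOf f) ∧ trace F V f = trace F W (g ^ k) := by
  obtain ⟨z, hz, hfz⟩ := exists_isPrimitiveRoot_trace_pow (AlgebraicClosure F) hV hf hn
  obtain ⟨y, hy, hgy⟩ := exists_isPrimitiveRoot_trace_pow (AlgebraicClosure F) hW hg (hfg ▸ hn)
  have : NeZero (orderOf g) := ⟨fun h => hn (by simp [hfg, h])⟩
  obtain ⟨k, -, hk, rfl⟩ := hy.isPrimitiveRoot_iff.1 (hfg ▸ hz)
  refine ⟨k, hfg ▸ hk, (algebraMap F (AlgebraicClosure F)).injective ?_⟩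
  rw [hgy, ← pow_one f, hfz, pow_one]

theorem orderOf_dvd_card_sq_sub_one [Fintype F] (hV : finrank F V = 2) (hf : f.det = 1)
    (hn : (orderOf f : F) ≠ 0) : orderOf f ∣ Fintype.card F ^ 2 - 1 := by
  obtain ⟨z, hz, hfz⟩ := exists_isPrimitiveRoot_trace_pow (AlgebraicClosure F) hV hf hn
  have hz0 : z ≠ 0 := hz.ne_zero fun h => hn (by simp [h])
  set Q := Fintype.card F
  have hfrob : z ^ Q + (z ^ Q)⁻¹ = z + z⁻¹ := by
    have htrace := hfz 1
    rw [pow_one, pow_one] at htrace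
    have := (FiniteField.frobeniusAlgHom F (AlgebraicClosure F)).commutes (trace F V f)
    rwa [htrace, map_add, map_inv₀, FiniteField.frobeniusAlgHom_apply] at this
  have hcases : z ^ Q = z ∨ z ^ Q = z⁻¹ := by
    have : (z ^ Q - z) * (z ^ Q - z⁻¹) = 0 := by
      field_simp at hfrob ⊢
      linear_combination hfrob
    simpa [sub_eq_zero] using this
  have hsq : z ^ Q ^ 2 = z := by
    rcases hcases with h | h <;> simp [sq, pow_mul, h]
  refine hz.dvd_of_pow_eq_one _ (mul_right_cancel₀ hz0 ?_)
  rw [← pow_succ, Nat.sub_add_cancel (Nat.one_le_pow _ _ Fintype.card_pos), hsq, one_mul]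

end Eigenvalue

section Dihedral

theorem exists_ne_zero_apply_eq_self {F V : Type*} [Ring F] [AddCommGroup V] [Module F V]
    {s : End F V} (hs : s * s = 1) (hne : s ≠ -1) : ∃ v ≠ 0, s v = v := by
  obtain ⟨x, hx⟩ : ∃ x, s x ≠ -x := by
    by_contra! h
    exact hne (LinearMap.ext h)
  have hss : s (s x) = x := LinearMap.congr_fun hs x
  exact ⟨s x + x, fun h => hx (eq_neg_of_add_eq_zero_left h), by rw [map_add, hss, add_comm]⟩

variable {F V : Type*} [Field F] [AddCommGroup V] [Module F V] {n : ℕ}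
  {ρ : Representation F (DihedralGroup n) V}

theorem isConj_r_inv (i : ZMod n) : IsConj (r i) (r i)⁻¹ :=
  isConj_iff.2 ⟨sr 0, by simp⟩

theorem apply_sr_zero_apply_r_one {v : V} (hv : ρ (sr 0) v = v) :
    ρ (sr 0) (ρ (r 1) v) = ρ (r 1)⁻¹ v := by
  nth_rw 2 [← hv]
  simp only [← Module.End.mul_apply, ← map_mul]
  simp

theorem det_apply_r_one_eq_one (hV : finrank F V = 2) (hρ : ρ (r 1) ^ 2 ≠ 1) : (ρ (r 1)).det = 1 :=
  det_eq_one_of_isConj_inv hV ρ (isConj_r_inv 1) hρ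

theorem apply_r_one_add_apply_inv (hV : finrank F V = 2) (hρ : ρ (r 1) ^ 2 ≠ 1) (v : V) :
    ρ (r 1) v + ρ (r 1)⁻¹ v = trace F V (ρ (r 1)) • v := by
  have h := add_det_smul_eq_trace_smul_one hV
    (show ρ (r 1) * ρ (r 1)⁻¹ = 1 by rw [← map_mul, mul_inv_cancel, map_one])
  rw [det_apply_r_one_eq_one hV hρ, one_smul] at h
  exact LinearMap.congr_fun h v

theorem apply_sr_zero_ne_neg_one (hρ : ρ (r 1) ^ 2 ≠ 1) : ρ (sr 0) ≠ -1 := by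
  intro h
  have hinv : ρ (r 1)⁻¹ = ρ (r 1) := by
    rw [show (r 1)⁻¹ = sr 0 * r 1 * sr (0 : ZMod n) by simp, map_mul, map_mul, h]
    simp
  apply hρ
  nth_rw 1 [sq, ← hinv]
  rw [← map_mul, inv_mul_cancel, map_one]

theorem smul_ne_apply_r_one (hV : finrank F V = 2) (hn : (n : F) ≠ 0)
    (hρ : ρ (r 1) ^ 2 ≠ 1) {v : V} (hv0 : v ≠ 0) (hv : ρ (sr 0) v = v) (c : F) :
    c • v ≠ ρ (r 1) v := by
  -- Otherwise `c ^ 2 = 1` and `c` is a double eigenvalue of `ρ (r 1)`, whose square is then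
  -- unipotent of order prime to the characteristic.
  intro hc
  have hc_inv : ρ (r 1)⁻¹ v = c • v := by
    rw [← apply_sr_zero_apply_r_one hv, ← hc, map_smul, hv]
  have hcc : c * c = 1 := by
    have : ρ (r 1) (ρ (r 1)⁻¹ v) = v := by
      rw [← Module.End.mul_apply, ← map_mul, mul_inv_cancel, map_one, Module.End.one_apply]
    rw [hc_inv, map_smul, ← hc, smul_smul] at this
    exact smul_left_injective F hv0 (by simpa using this)
  have htrace : trace F V (ρ (r 1)) = 2 * c := by
    have := apply_r_one_add_apply_inv hV hρ v
    rw [hc_inv, ← hc, ← two_smul F, smul_smul] at this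
    exact (smul_left_injective F hv0 this).symm
  have hsq : ρ (r 1) ^ 2 = (2 * c) • ρ (r 1) - (1 : F) • 1 := by
    rw [← htrace, ← det_apply_r_one_eq_one hV hρ]
    exact sq_eq_trace_smul_sub_det_smul hV _
  have hfactor : ρ (r 1) ^ 2 - 1 = (2 * c) • (ρ (r 1) - c • 1) := by
    rw [hsq, smul_sub, smul_smul, mul_assoc, hcc]
    module
  have hshift : (ρ (r 1) - c • 1) ^ 2 = 0 := by
    rw [((Commute.one_right _).smul_right c).sub_sq, smul_pow, one_pow, sq c, hcc, hsq,
      mul_smul_comm, mul_one, two_mul (ρ (r 1))]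
    module
  have hnil : (ρ (r 1) ^ 2 - 1) ^ 2 = 0 := by rw [hfactor, smul_pow, hshift, smul_zero]
  refine hρ (eq_one_of_isNilpotent_sub_one hn ?_ ⟨2, hnil⟩)
  rw [pow_right_comm, ← map_pow, r_one_pow_n, map_one, one_pow]

theorem exists_basis_toMatrix_dihedral (hV : finrank F V = 2) (hn : (n : F) ≠ 0)
    (hρ : ρ (r 1) ^ 2 ≠ 1) :
    ∃ b : Basis (Fin 2) F V,
      LinearMap.toMatrixAlgEquiv b (ρ (r 1)) = !![0, -1; 1, trace F V (ρ (r 1))] ∧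
      LinearMap.toMatrixAlgEquiv b (ρ (sr 0)) = !![1, trace F V (ρ (r 1)); 0, -1] := by
  obtain ⟨v, hv0, hv⟩ := exists_ne_zero_apply_eq_self
    (by rw [← map_mul, sr_mul_self, map_one]) (apply_sr_zero_ne_neg_one hρ)
  have hli : LinearIndependent F ![v, ρ (r 1) v] :=
    (LinearIndependent.pair_iff' hv0).2 (smul_ne_apply_r_one hV hn hρ hv0 hv)
  let b := basisOfLinearIndependentOfCardEqFinrank hli (by simp [hV])
  have hb0 : b 0 = v := by simp [b]
  have hb1 : b 1 = ρ (r 1) v := by simp [b]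
  have hr0 : ρ (r 1) (b 0) = b 1 := by rw [hb0, hb1]
  have hs0 : ρ (sr 0) (b 0) = b 0 := by rw [hb0, hv]
  have hr1 : ρ (r 1) (b 1) = -b 0 + trace F V (ρ (r 1)) • b 1 := by
    rw [hb0, hb1, ← apply_r_one_add_apply_inv hV hρ (ρ (r 1) v)]
    simp [← Module.End.mul_apply, ← map_mul]
  have hs1 : ρ (sr 0) (b 1) = trace F V (ρ (r 1)) • b 0 - b 1 := by
    rw [hb0, hb1, apply_sr_zero_apply_r_one hv, ← apply_r_one_add_apply_inv hV hρ v,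
      add_sub_cancel_left]
  refine ⟨b, ?_, ?_⟩ <;> ext i j <;> fin_cases j <;> fin_cases i <;>
    simp [LinearMap.toMatrixAlgEquiv_apply, hr0, hr1, hs0, hs1]

theorem nonempty_equiv_of_toMatrix_eq {F G V W ι : Type*} [CommRing F] [Monoid G] [AddCommGroup V]
    [Module F V] [AddCommGroup W] [Module F W] [Fintype ι] [DecidableEq ι]
    {ρ : Representation F G V} {σ : Representation F G W} (b : Basis ι F V) (c : Basis ι F W)
    (h : ∀ g, LinearMap.toMatrixAlgEquiv b (ρ g) = LinearMap.toMatrixAlgEquiv c (σ g)) :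
    Nonempty (ρ.Equiv σ) := by
  refine ⟨.mk (b.equiv c (.refl ι)) fun g => b.ext fun i => ?_⟩
  apply c.repr.injective
  ext j
  have hij := congrFun (congrFun (h g) j) i
  rw [LinearMap.toMatrixAlgEquiv_apply, LinearMap.toMatrixAlgEquiv_apply] at hij
  simp [Module.Basis.equiv, hij]

theorem dihedralGroup_hom_ext {M : Type*} [Monoid M] {f g : DihedralGroup n →* M}
    (hr : f (r 1) = g (r 1)) (hs : f (sr 0) = g (sr 0)) : f = g := by
  have hri (i : ZMod n) : f (r i) = g (r i) := by
    obtain ⟨k, rfl⟩ := ZMod.intCast_surjective i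
    rw [← r_one_zpow]
    exact (f.eqLocus g).zpow_mem hr k
  ext (i | i)
  · exact hri i
  · rw [← zero_add i, ← sr_mul_r, map_mul, map_mul, hri, hs]

variable {W : Type*} [AddCommGroup W] [Module F W] {σ : Representation F (DihedralGroup n) W}

theorem nonempty_equiv_of_trace_eq (hV : finrank F V = 2) (hW : finrank F W = 2)
    (hn : (n : F) ≠ 0) (hρ : ρ (r 1) ^ 2 ≠ 1) (hσ : σ (r 1) ^ 2 ≠ 1)
    (htrace : trace F V (ρ (r 1)) = trace F W (σ (r 1))) : Nonempty (ρ.Equiv σ) := by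
  obtain ⟨b, hbr, hbs⟩ := exists_basis_toMatrix_dihedral hV hn hρ
  obtain ⟨c, hcr, hcs⟩ := exists_basis_toMatrix_dihedral hW hn hσ
  refine nonempty_equiv_of_toMatrix_eq b c (DFunLike.congr_fun
    (dihedralGroup_hom_ext (f := (LinearMap.toMatrixAlgEquiv b).toMonoidHom.comp ρ)
      (g := (LinearMap.toMatrixAlgEquiv c).toMonoidHom.comp σ) ?_ ?_))
  · exact hbr.trans (htrace ▸ hcr.symm)
  · exact hbs.trans (htrace ▸ hcs.symm)

/-- The automorphism `r i ↦ r (k i)`, `sr i ↦ sr (k i)` of the dihedral group, for a unit `k`.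
Twisting by it moves among the faithful planar representations. -/
def dihedralGroupScale (k : (ZMod n)ˣ) : DihedralGroup n ≃* DihedralGroup n where
  toFun
    | .r i => .r (k * i)
    | .sr i => .sr (k * i)
  invFun
    | .r i => .r (↑k⁻¹ * i)
    | .sr i => .sr (↑k⁻¹ * i)
  left_inv := by rintro (i | i) <;> simp
  right_inv := by rintro (i | i) <;> simp
  map_mul' := by rintro (i | i) (j | j) <;> simp [mul_add, mul_sub]

theorem orderOf_apply_r_one {M : Type*} [Monoid M] {f : DihedralGroup n →* M}
    (hf : Function.Injective f) : orderOf (f (r 1)) = n := by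
  rw [orderOf_injective f hf, orderOf_r_one]

theorem apply_r_one_sq_ne_one {M : Type*} [Monoid M] {f : DihedralGroup n →* M} (hn : 2 < n)
    (hf : Function.Injective f) : f (r 1) ^ 2 ≠ 1 :=
  pow_ne_one_of_lt_orderOf two_ne_zero (by rwa [orderOf_apply_r_one hf])

theorem exists_equiv_comp_dihedralGroupScale (hV : finrank F V = 2) (hW : finrank F W = 2)
    (hn : 2 < n) (hnF : (n : F) ≠ 0) (hρ : Function.Injective ρ) (hσ : Function.Injective σ) :
    ∃ k : (ZMod n)ˣ, Nonempty (ρ.Equiv (σ.comp (dihedralGroupScale k).toMonoidHom)) := by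
  have hρ2 := apply_r_one_sq_ne_one hn hρ
  have hσ2 := apply_r_one_sq_ne_one hn hσ
  obtain ⟨k, hk, htrace⟩ := exists_coprime_trace_eq_trace_pow hV hW (det_apply_r_one_eq_one hV hρ2)
    (det_apply_r_one_eq_one hW hσ2) (by rwa [orderOf_apply_r_one hρ])
    ((orderOf_apply_r_one hρ).trans (orderOf_apply_r_one hσ).symm)
  rw [orderOf_apply_r_one hρ] at hk
  let u := ZMod.unitOfCoprime k hk
  refine ⟨u, nonempty_equiv_of_trace_eq hV hW hnF hρ2 ?_ ?_⟩
  · exact apply_r_one_sq_ne_one hn (hσ.comp (dihedralGroupScale u).injective)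
  · rw [htrace, ← map_pow, r_one_pow]
    simp [dihedralGroupScale, u]

theorem dvd_card_sq_sub_one_of_injective [Fintype F] (hV : finrank F V = 2) (hn : 2 < n)
    (hnF : (n : F) ≠ 0) (hρ : Function.Injective ρ) : n ∣ Fintype.card F ^ 2 - 1 := by
  have hdet := det_apply_r_one_eq_one hV (apply_r_one_sq_ne_one hn hρ)
  have hdvd := orderOf_dvd_card_sq_sub_one hV hdet
  rw [orderOf_apply_r_one hρ] at hdvd
  exact hdvd hnF

theorem dihedralGroup_normal_eq_bot_of_pow_eq_one {m : ℕ} (hn : 2 < n) (hmn : m.Coprime n)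
    {A : Subgroup (DihedralGroup n)} [A.Normal] (hA : ∀ a ∈ A, a ^ m = 1) : A = ⊥ := by
  have hr {i : ZMod n} (hi : r i ∈ A) : r i = 1 := by
    rw [← orderOf_eq_one_iff, ← Nat.dvd_one, ← hmn]
    exact Nat.dvd_gcd (orderOf_dvd_of_pow_eq_one (hA _ hi))
      (orderOf_dvd_of_pow_eq_one (by simp [r_pow]))
  refine A.eq_bot_iff_forall.2 ?_
  rintro (i | i) hi
  · exact hr hi
  · have hmul : sr i * (r (-1) * sr i * (r (-1))⁻¹) = r 2 := by
      rw [inv_r, neg_neg, r_mul_sr, sr_mul_r, sr_mul_sr]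
      congr 1
      ring
    have hmem : r 2 ∈ A := hmul ▸ A.mul_mem hi (‹A.Normal›.conj_mem _ hi _)
    have htwo : ((2 : ℕ) : ZMod n) = 0 := by
      exact_mod_cast r.inj ((hr hmem).trans one_def)
    exact absurd (Nat.le_of_dvd two_pos ((ZMod.natCast_eq_zero_iff 2 n).1 htwo)) hn.not_ge

end Dihedral

section SemidirectProduct

/-- The tautological representation of the automorphism group of the additive group of a
`ZMod p`-module, every group automorphism being `ZMod p`-linear. It turns actions on elementary
abelian groups into representations. -/
def mulAutRepresentation (p : ℕ) (V : Type*) [AddCommGroup V] [Module (ZMod p) V] :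
    Representation (ZMod p) (MulAut (Multiplicative V)) V where
  toFun f := AddMonoidHom.toZModLinearMap p (MonoidHom.toAdditive f.toMonoidHom)
  map_one' := rfl
  map_mul' _ _ := rfl

theorem mulAutRepresentation_injective (p : ℕ) (V : Type*) [AddCommGroup V] [Module (ZMod p) V] :
    Function.Injective (mulAutRepresentation p V) :=
  fun _ _ h => MulEquiv.ext fun x => congrArg Multiplicative.ofAdd (LinearMap.congr_fun h x.toAdd)

theorem nonempty_mulEquiv_semidirectProduct {p : ℕ} {V D E : Type*} [AddCommGroup V]
    [Module (ZMod p) V] [Group D] [Group E] {φ : D →* MulAut (Multiplicative V)}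
    {ψ : E →* MulAut (Multiplicative V)} (α : D ≃* E)
    (L : Representation.Equiv ((mulAutRepresentation p V).comp φ)
      (((mulAutRepresentation p V).comp ψ).comp α.toMonoidHom)) :
    Nonempty (Multiplicative V ⋊[φ] D ≃* Multiplicative V ⋊[ψ] E) := by
  refine ⟨SemidirectProduct.congr (AddEquiv.toMultiplicative L.toLinearEquiv.toAddEquiv) α
    fun d => MulEquiv.ext fun x => ?_⟩
  exact congrArg Multiplicative.ofAdd (LinearMap.congr_fun (L.isIntertwining' d) x.toAdd)

end SemidirectProduct

namespace NHConfig

variable {p q : ℕ} {G : Type*} [Group G] {N H : Subgroup G}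

theorem pow_eq_one (h : NHConfig p q G N H) {g : G} (hg : g ∈ N) : g ^ p = 1 := by
  obtain ⟨-, -, ⟨e⟩, -, -⟩ := h
  have : (⟨g, hg⟩ : N) ^ p = 1 := by
    apply e.injective
    rw [map_pow, map_one]
    apply Multiplicative.toAdd.injective
    ext <;> simp
  exact congrArg Subtype.val this

theorem disjoint (h : NHConfig p q G N H) (hpq : p.Coprime q) (hq : 2 < q) : Disjoint N H := by
  have hpow {g : G} (hg : g ∈ N) : g ^ p = 1 := h.pow_eq_one hg
  obtain ⟨hN, -, -, ⟨f⟩, -⟩ := h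
  have : ((N.subgroupOf H).map f.toMonoidHom).Normal := .map inferInstance _ f.surjective
  have hbot : (N.subgroupOf H).map f.toMonoidHom = ⊥ := by
    refine dihedralGroup_normal_eq_bot_of_pow_eq_one hq hpq ?_
    rintro _ ⟨y, hy, rfl⟩
    rw [← map_pow, show y ^ p = 1 from Subtype.ext (hpow hy), map_one]
  rwa [Subgroup.map_eq_bot_iff_of_injective _ f.injective, Subgroup.subgroupOf_eq_bot] at hbot

theorem exists_mulEquiv_semidirectProduct (h : NHConfig p q G N H) (hpq : p.Coprime q)
    (hq : 2 < q) :
    ∃ φ : DihedralGroup q →* MulAut (Multiplicative (ZMod p × ZMod p)),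
      Function.Injective φ ∧
        Nonempty (G ≃* Multiplicative (ZMod p × ZMod p) ⋊[φ] DihedralGroup q) := by
  have hd := h.disjoint hpq hq
  obtain ⟨hN, hNH, ⟨e⟩, ⟨f⟩, hcent⟩ := h
  have hcompl : N.IsComplement' H := by
    refine Subgroup.isComplement'_of_disjoint_and_mul_eq_univ hd (Set.eq_univ_of_forall fun g => ?_)
    obtain ⟨n, hn, x, hx, rfl⟩ := hNH g
    exact Set.mul_mem_mul hn hx
  let ψ : H →* MulAut N := N.normalizerMonoidHom.comp
    (Subgroup.inclusion (N.normalizer_eq_top ▸ le_top))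
  have hψ : Function.Injective ψ := by
    refine (injective_iff_map_eq_one _).2 fun x hx => ?_
    have hxN : (x : G) ∈ N := by
      have : Subgroup.inclusion (N.normalizer_eq_top ▸ le_top) x ∈ N.normalizerMonoidHom.ker := hx
      rwa [Subgroup.normalizerMonoidHom_ker, hcent] at this
    exact Subtype.ext (Subgroup.disjoint_def.1 hd hxN x.2)
  exact ⟨_, (MulAut.congr e).injective.comp (hψ.comp f.symm.injective),
    ⟨(SemidirectProduct.mulEquivSubgroup hcompl).symm.trans (SemidirectProduct.congr' e f)⟩⟩

end NHConfig

theorem stmt11_general {p q : ℕ} (hp : p.Prime) (hpq : p.Coprime q) (hq : 2 < q)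
    (G : Type*) [Group G] (N H : Subgroup G) (hG : NHConfig p q G N H)
    (G' : Type*) [Group G'] (N' H' : Subgroup G') (hG' : NHConfig p q G' N' H') :
    q ∣ p ^ 2 - 1 ∧ Nonempty (G ≃* G') := by
  have : Fact p.Prime := ⟨hp⟩
  have hV : finrank (ZMod p) (ZMod p × ZMod p) = 2 := by simp
  have hqp : (q : ZMod p) ≠ 0 := by
    rwa [Ne, ZMod.natCast_eq_zero_iff, ← hp.coprime_iff_not_dvd]
  obtain ⟨φ, hφ, ⟨e⟩⟩ := hG.exists_mulEquiv_semidirectProduct hpq hq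
  obtain ⟨φ', hφ', ⟨e'⟩⟩ := hG'.exists_mulEquiv_semidirectProduct hpq hq
  let τ := mulAutRepresentation p (ZMod p × ZMod p)
  have hρ : Function.Injective (τ.comp φ) := (mulAutRepresentation_injective p _).comp hφ
  have hρ' : Function.Injective (τ.comp φ') := (mulAutRepresentation_injective p _).comp hφ'
  refine ⟨by simpa using dvd_card_sq_sub_one_of_injective hV hq hqp hρ, ?_⟩
  obtain ⟨k, ⟨L⟩⟩ := exists_equiv_comp_dihedralGroupScale hV hV hq hqp hρ hρ'
  obtain ⟨E⟩ := nonempty_mulEquiv_semidirectProduct (dihedralGroupScale k) L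
  exact ⟨e.trans (E.trans e'.symm)⟩

/-- Let `p > q` be odd primes and let `G = NH` be a group with
`N ≅ ℤ_p × ℤ_p` normal in `G`, `H ≅ D_{2q}` a subgroup, and `C_G(N) = N`.
Then `q` divides `p² - 1`, and any two such groups are isomorphic. -/
theorem stmt11 {p q : ℕ} (hp : p.Prime) (hq : q.Prime) (hpo : Odd p)
    (hqo : Odd q) (hlt : q < p)
    (G : Type*) [Group G] (N H : Subgroup G) (hG : NHConfig p q G N H)
    (G' : Type*) [Group G'] (N' H' : Subgroup G') (hG' : NHConfig p q G' N' H') :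
    q ∣ p ^ 2 - 1 ∧ Nonempty (G ≃* G') :=
  stmt11_general hp ((Nat.coprime_primes hp hq).2 hlt.ne')
    (hq.two_le.lt_of_ne (hqo.ne_two_of_dvd_nat dvd_rfl).symm) G N H hG G' N' H' hG'
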